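/- arXiv:1909.07206 — 2 statements merged into one kernel-verified Lean document; each statement's English description precedes it below -/
import Mathlib

section
/- Let n ≥ 1 and let w be a permutation of [n]. If the Schubert polynomial S_w(x) equals Max_w(x), then w avoids the permutation patterns 1432 and 1423. -/
open MvPolynomial

/-- Gale order: `C ≤ D` iff same cardinality and for each `k`, the `k`-th least element of `C`
is at most the `k`-th least element of `D`. -/
def GaleLE {n : ℕ} (C D : Finset (Fin n)) : Prop :=
  C.card = D.card ∧ ∀ (k : ℕ) (hC : k < C.card) (hD : k < D.card),
    (C.orderIsoOfFin rfl ⟨k, hC⟩ : Fin n) ≤ (D.orderIsoOfFin rfl ⟨k, hD⟩ : Fin n)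

/-- `C ≤ D` for diagrams: columnwise Gale order. -/
def DiagramLE {n : ℕ} (C D : Fin n → Finset (Fin n)) : Prop := ∀ j, GaleLE (C j) (D j)

/-- The Rothe diagram of a permutation `w` (0-indexed): column `j` consists of the rows `i`
with `w i > j` and `i < w⁻¹ j`. -/
def rothe {n : ℕ} (w : Equiv.Perm (Fin n)) (j : Fin n) : Finset (Fin n) :=
  Finset.univ.filter fun i => j < w i ∧ i < w.symm j

/-- The monomial `x^C = ∏_j ∏_{i ∈ C_j} x_i` of a diagram `C`. -/
noncomputable def xDiagram {n : ℕ} (C : Fin n → Finset (Fin n)) : MvPolynomial (Fin n) ℤ :=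
  ∏ j, ∏ i ∈ C j, X i

/- `Max_D(x) = ∑_{C ≤ D} x^C`, summed over all diagrams `C` with `C ≤ D`. -/
open scoped Classical in
noncomputable def MaxPoly {n : ℕ} (D : Fin n → Finset (Fin n)) : MvPolynomial (Fin n) ℤ :=
  ∑ C ∈ Finset.univ.filter (fun C : Fin n → Finset (Fin n) => DiagramLE C D), xDiagram C

/-- `S` is the family of Schubert polynomials: `S_{w₀} = x_1^{n-1} ⋯ x_{n-1}` for the longest
permutation `w₀` (i.e. `Fin.revPerm`), and whenever `w_i < w_{i+1}`,
`S_w = ∂_i S_{w s_i}`, expressed denominator-free as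
`(x_i - x_{i+1}) S_w = S_{w s_i} - s_i · S_{w s_i}`. -/
def IsSchubertFamily {n : ℕ} (S : Equiv.Perm (Fin n) → MvPolynomial (Fin n) ℤ) : Prop :=
  S Fin.revPerm = (∏ i : Fin n, X i ^ (n - 1 - (i : ℕ))) ∧
  ∀ (w : Equiv.Perm (Fin n)) (i j : Fin n), (i : ℕ) + 1 = (j : ℕ) → w i < w j →
    (X i - X j) * S w =
      S (w * Equiv.swap i j) - rename (Equiv.swap i j) (S (w * Equiv.swap i j))

/-- `w` contains the pattern `π`: there is a strictly increasing choice of positions on which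
`w` is order isomorphic to `π`. -/
def ContainsPattern {n m : ℕ} (w : Equiv.Perm (Fin n)) (π : Fin m → ℕ) : Prop :=
  ∃ f : Fin m ↪o Fin n, ∀ s t : Fin m, π s < π t ↔ w (f s) < w (f t)

/-- `w` avoids the pattern `π`. -/
def AvoidsPattern {n m : ℕ} (w : Equiv.Perm (Fin n)) (π : Fin m → ℕ) : Prop :=
  ¬ ContainsPattern w π

/-- Coefficient as a function of a plain exponent function. -/
noncomputable def cf {n : ℕ} (f : MvPolynomial (Fin n) ℤ) (e : Fin n → ℕ) : ℤ :=
  coeff (Finsupp.equivFunOnFinite.symm e) f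

lemma cf_sub {n : ℕ} (f g : MvPolynomial (Fin n) ℤ) (e : Fin n → ℕ) :
    cf (f - g) e = cf f e - cf g e := by simp [cf]

lemma cf_X_mul {n : ℕ} (i : Fin n) (f : MvPolynomial (Fin n) ℤ) (e : Fin n → ℕ) :
    cf (X i * f) e = if 0 < e i then cf f (Function.update e i (e i - 1)) else 0 := by
  classical
  unfold cf
  rw [coeff_X_mul']
  simp only [Finsupp.mem_support_iff, Finsupp.equivFunOnFinite_symm_apply_apply, Nat.pos_iff_ne_zero]
  split_ifs with h
  · congr 1
    ext k
    by_cases hk : k = i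
    · subst hk; simp
    · simp [hk]
  · rfl

lemma cf_rename_swap {n : ℕ} (i j : Fin n) (f : MvPolynomial (Fin n) ℤ) (e : Fin n → ℕ) :
    cf (rename (Equiv.swap i j) f) e = cf f (e ∘ Equiv.swap i j) := by
  unfold cf
  rw [← coeff_rename_mapDomain (Equiv.swap i j) (Equiv.injective _) f
    (Finsupp.equivFunOnFinite.symm (e ∘ Equiv.swap i j))]
  congr 1
  ext k
  rw [← Finsupp.equivMapDomain_eq_mapDomain]
  simp [Finsupp.equivMapDomain_apply]

lemma rename_swap_eq {n : ℕ} {i j : Fin n} (hij : i ≠ j) {f g : MvPolynomial (Fin n) ℤ}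
    (h : (X i - X j) * f = g - rename (Equiv.swap i j) g) : rename (Equiv.swap i j) f = f := by
  have h2 := congrArg (rename (Equiv.swap i j)) h
  simp only [map_mul, map_sub, rename_X, Equiv.swap_apply_left, Equiv.swap_apply_right,
    rename_rename] at h2
  have : (⇑(Equiv.swap i j) ∘ ⇑(Equiv.swap i j)) = id := by ext k; simp
  rw [this, rename_id_apply] at h2
  have hne : (X i - X j : MvPolynomial (Fin n) ℤ) ≠ 0 := by
    rw [sub_ne_zero]
    intro h; exact hij (X_injective h)
  apply mul_left_cancel₀ hne
  linear_combination -h2 - h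

/-- Divided difference relation at the level of coefficients, in subtraction-free form. -/
lemma dd_rel {n : ℕ} {i j : Fin n} {f g : MvPolynomial (Fin n) ℤ}
    (h : (X i - X j) * f = g - rename (Equiv.swap i j) g) (e : Fin n → ℕ) :
    (if 0 < e i then cf f (Function.update e i (e i - 1)) else 0) -
      (if 0 < e j then cf f (Function.update e j (e j - 1)) else 0) =
    cf g e - cf g (e ∘ Equiv.swap i j) := by
  rw [← cf_rename_swap, ← cf_sub, ← h, sub_mul, cf_sub, cf_X_mul, cf_X_mul]

lemma dd_symm {n : ℕ} {i j : Fin n} (hij : i ≠ j) {f g : MvPolynomial (Fin n) ℤ}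
    (h : (X i - X j) * f = g - rename (Equiv.swap i j) g) (e : Fin n → ℕ) :
    cf f (e ∘ Equiv.swap i j) = cf f e := by
  rw [← cf_rename_swap, rename_swap_eq hij h]

lemma dd_pre {n : ℕ} {i j : Fin n} (hij : i ≠ j) {f g : MvPolynomial (Fin n) ℤ}
    (h : (X i - X j) * f = g - rename (Equiv.swap i j) g) (m : ℕ) :
    ∀ (e : Fin n → ℕ), e j = m → cf f e ≠ 0 →
    ∃ d : Fin n → ℕ, cf g d ≠ 0 ∧ (∀ k, k ≠ i → k ≠ j → d k = e k) ∧ d i + d j = e i + e j + 1 ∧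
      (e i + 1 ≤ d i ∨ e i + 1 ≤ d j) := by
  induction m with
  | zero =>
    intro e hej he
    have := dd_rel h (Function.update e i (e i + 1))
    simp only [Function.update_self, Nat.zero_lt_succ, if_true, Function.update_idem,
      Nat.add_sub_cancel, Function.update_eq_self, Function.update_of_ne hij.symm, hej, lt_irrefl,
      if_false, sub_zero] at this
    rw [this] at he
    by_cases h1 : cf g (Function.update e i (e i + 1)) = 0
    · refine ⟨_, fun h2 => he (by rw [h1, h2, sub_zero]), ?_, ?_, ?_⟩
      · intro k hi hj
        simp [Equiv.swap_apply_of_ne_of_ne hi hj, hi]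
      · simp [hij.symm]; omega
      · simp
    · refine ⟨_, h1, ?_, ?_, ?_⟩
      · intro k hi hj; simp [hi]
      · simp [hij.symm]; omega
      · simp
  | succ m ih =>
    intro e hej he
    have := dd_rel h (Function.update e i (e i + 1))
    simp only [Function.update_self, Nat.zero_lt_succ, if_true, Function.update_idem,
      Nat.add_sub_cancel, Function.update_eq_self, Function.update_of_ne hij.symm, hej] at this
    by_cases h1 : cf g (Function.update e i (e i + 1)) = 0
    · by_cases h2 : cf g ((Function.update e i (e i + 1)) ∘ Equiv.swap i j) = 0
      · rw [h1, h2, sub_zero, sub_eq_zero] at this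
        rw [this] at he
        obtain ⟨d, hd, hd1, hd2, hd3⟩ := ih _ (by simp) he
        refine ⟨d, hd, ?_, ?_, ?_⟩
        · intro k hi hj; rw [hd1 k hi hj]; simp [hi, hj]
        · rw [hd2]; simp [hij]; omega
        · simp [hij] at hd3; omega
      · refine ⟨_, h2, ?_, ?_, ?_⟩
        · intro k hi hj
          simp [Equiv.swap_apply_of_ne_of_ne hi hj, hi]
        · simp [hij.symm]; omega
        · simp
    · refine ⟨_, h1, ?_, ?_, ?_⟩
      · intro k hi hj; simp [hi]
      · simp [hij.symm]; omega
      · simp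

/-- Lehmer code. -/
def code {n : ℕ} (w : Equiv.Perm (Fin n)) (i : Fin n) : ℕ :=
  (Finset.univ.filter fun k => i < k ∧ w k < w i).card

lemma code_swap_left {n : ℕ} (w : Equiv.Perm (Fin n)) (i j : Fin n) (hij : (i : ℕ) + 1 = j)
    (hw : w i < w j) : code (w * Equiv.swap i j) i = code w j + 1 := by
  classical
  unfold code
  rw [← Finset.card_insert_of_notMem (a := j)
    (s := Finset.univ.filter fun k => j < k ∧ w k < w j) (by simp)]
  congr 1
  ext k
  simp only [Finset.mem_filter, Finset.mem_univ, true_and, Equiv.Perm.mul_apply,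
    Equiv.swap_apply_left, Finset.mem_insert]
  by_cases hk : k = j
  · subst hk; simp [hw]; omega
  · by_cases hk' : k = i
    · subst hk'; simp [hk]; omega
    · rw [Equiv.swap_apply_of_ne_of_ne hk' hk]; simp only [hk, false_or]
      have : i < k ↔ j < k := by omega
      rw [this]

lemma code_swap_right {n : ℕ} (w : Equiv.Perm (Fin n)) (i j : Fin n) (hij : (i : ℕ) + 1 = j)
    (hw : w i < w j) : code (w * Equiv.swap i j) j = code w i := by
  classical
  unfold code
  congr 1
  ext k
  simp only [Finset.mem_filter, Finset.mem_univ, true_and, Equiv.Perm.mul_apply,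
    Equiv.swap_apply_right]
  by_cases hk : k = j
  · subst hk; simp [hw.le]
  · by_cases hk' : k = i
    · subst hk'; simp; omega
    · rw [Equiv.swap_apply_of_ne_of_ne hk' hk]
      have : i < k ↔ j < k := by omega
      rw [this]

lemma code_swap_of_ne {n : ℕ} (w : Equiv.Perm (Fin n)) (i j : Fin n) (hij : (i : ℕ) + 1 = j)
    (l : Fin n) (hi : l ≠ i) (hj : l ≠ j) : code (w * Equiv.swap i j) l = code w l := by
  classical
  unfold code
  refine Finset.card_bij (fun k _ => Equiv.swap i j k) ?_ ?_ ?_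
  · intro k
    simp only [Finset.mem_filter, Finset.mem_univ, true_and, Equiv.Perm.mul_apply,
      Equiv.swap_apply_of_ne_of_ne hi hj]
    rintro ⟨h1, h2⟩
    refine ⟨?_, h2⟩
    by_cases hk : k = j
    · subst hk; simp; omega
    · by_cases hk' : k = i
      · subst hk'; simp; omega
      · rwa [Equiv.swap_apply_of_ne_of_ne hk' hk]
  · intro a _ b _ h; simpa using h
  · intro k
    simp only [Finset.mem_filter, Finset.mem_univ, true_and, Equiv.Perm.mul_apply,
      Equiv.swap_apply_of_ne_of_ne hi hj]
    rintro ⟨h1, h2⟩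
    refine ⟨Equiv.swap i j k, ⟨?_, by simpa using h2⟩, by simp⟩
    by_cases hk : k = j
    · subst hk; simp; omega
    · by_cases hk' : k = i
      · subst hk'; simp; omega
      · rwa [Equiv.swap_apply_of_ne_of_ne hk' hk]

lemma tail_anti {n : ℕ} (w : Equiv.Perm (Fin n)) (j : ℕ)
    (h : ∀ k l : Fin n, (k : ℕ) + 1 = l → j ≤ k → w l < w k) (d : ℕ) :
    ∀ k l : Fin n, j ≤ k → (k : ℕ) + d + 1 = l → w l < w k := by
  induction d with
  | zero => intro k l hk hl; exact h k l (by omega) hk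
  | succ d ih =>
    intro k l hk hl
    have hm : (k : ℕ) + d + 1 < n := by omega
    exact (h ⟨_, hm⟩ l (by simp; omega) (by simp; omega)).trans (ih k ⟨_, hm⟩ hk rfl)

lemma code_tail {n : ℕ} (w : Equiv.Perm (Fin n)) (j : ℕ)
    (h : ∀ k l : Fin n, (k : ℕ) + 1 = l → j ≤ k → w l < w k) (k : Fin n) (hk : j ≤ k) :
    code w k = n - 1 - k := by
  unfold code
  rw [← Fin.card_Ioi]
  congr 1
  ext l
  simp only [Finset.mem_filter, Finset.mem_univ, true_and, Finset.mem_Ioi, and_iff_left_iff_imp]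
  intro hl
  exact tail_anti w j h (l - k - 1) k l hk (by omega)

lemma eq_rev {n : ℕ} (w : Equiv.Perm (Fin n))
    (h : ∀ k l : Fin n, (k : ℕ) + 1 = l → w l < w k) : w = Fin.revPerm := by
  have hanti : ∀ k l : Fin n, k < l → w l < w k := fun k l hkl =>
    tail_anti w 0 (fun k l h1 _ => h k l h1) (l - k - 1) k l (by omega) (by omega)
  let e : Fin n ≃o Fin n := StrictMono.orderIsoOfSurjective (fun i => w (Fin.rev i))
    (fun a b hab => hanti _ _ (Fin.rev_lt_rev.2 hab))
    (w.surjective.comp Fin.rev_surjective)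
  have he : e = OrderIso.refl _ := Subsingleton.elim _ _
  ext i
  have : w (Fin.rev (Fin.rev i)) = Fin.rev i :=
    congrArg (fun f : Fin n ≃o Fin n => f (Fin.rev i)) he
  rw [Fin.rev_rev] at this
  rw [this, Fin.revPerm_apply]

lemma exists_last_ascent {n : ℕ} (w : Equiv.Perm (Fin n)) (hw : w ≠ Fin.revPerm) :
    ∃ i j : Fin n, (i : ℕ) + 1 = j ∧ w i < w j ∧
      ∀ k l : Fin n, (k : ℕ) + 1 = l → (j : ℕ) ≤ k → w l < w k := by
  classical
  let A := Finset.univ.filter fun i : Fin n => ∃ j : Fin n, (i : ℕ) + 1 = j ∧ w i < w j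
  have hA : A.Nonempty := by
    by_contra hA
    rw [Finset.not_nonempty_iff_eq_empty] at hA
    apply hw
    apply eq_rev
    intro k l hkl
    by_contra hlt
    have hne : w k ≠ w l := fun h => by have := w.injective h; subst this; omega
    have : k ∈ A := by
      simp only [A, Finset.mem_filter, Finset.mem_univ, true_and]
      exact ⟨l, hkl, lt_of_le_of_ne (not_lt.1 hlt) hne⟩
    simp [hA] at this
  obtain ⟨i, hi, hmax⟩ := Finset.exists_max_image A id hA
  have hi' := hi
  simp only [A, Finset.mem_filter, Finset.mem_univ, true_and] at hi'
  obtain ⟨j, hij, hwij⟩ := hi'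
  refine ⟨i, j, hij, hwij, ?_⟩
  intro k l hkl hjk
  by_contra hlt
  have hne : w k ≠ w l := fun h => by have := w.injective h; subst this; omega
  have : k ∈ A := by
    simp only [A, Finset.mem_filter, Finset.mem_univ, true_and]
    exact ⟨l, hkl, lt_of_le_of_ne (not_lt.1 hlt) hne⟩
  have := hmax k this
  simp at this
  omega

lemma measure_swap {n : ℕ} (w : Equiv.Perm (Fin n)) (i j : Fin n) (hij : (i : ℕ) + 1 = j)
    (hw : w i < w j) :
    ∑ k : Fin n, (k : ℕ) * ((w * Equiv.swap i j) k : ℕ) < ∑ k : Fin n, (k : ℕ) * (w k : ℕ) := by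
  classical
  have hne : i ≠ j := by intro h; subst h; omega
  rw [← Finset.add_sum_erase _ _ (Finset.mem_univ i), ← Finset.add_sum_erase (a := i) _ (fun k : Fin n => (k : ℕ) * (w k : ℕ)) (Finset.mem_univ i),
    ← Finset.add_sum_erase _ _ (Finset.mem_erase.2 ⟨hne.symm, Finset.mem_univ j⟩),
    ← Finset.add_sum_erase (a := j) _ (fun k : Fin n => (k : ℕ) * (w k : ℕ)) (Finset.mem_erase.2 ⟨hne.symm, Finset.mem_univ j⟩)]
  have : ∑ x ∈ (Finset.univ.erase i).erase j, (x : ℕ) * ((w * Equiv.swap i j) x : ℕ) =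
      ∑ x ∈ (Finset.univ.erase i).erase j, (x : ℕ) * (w x : ℕ) := by
    apply Finset.sum_congr rfl
    intro x hx
    simp only [Finset.mem_erase] at hx
    rw [Equiv.Perm.mul_apply, Equiv.swap_apply_of_ne_of_ne hx.2.1 hx.1]
  rw [this]
  simp only [Equiv.Perm.mul_apply, Equiv.swap_apply_left, Equiv.swap_apply_right]
  rw [← hij]
  have : (w i : ℕ) < w j := hw
  nlinarith

/-- Staircase bound, reverse-lexicographic leading term. -/
structure Good {n : ℕ} (w : Equiv.Perm (Fin n)) (f : MvPolynomial (Fin n) ℤ) : Prop where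
  stair : ∀ e, cf f e ≠ 0 → ∀ k, e k ≤ n - 1 - k
  rl : ∀ e, cf f e ≠ 0 → ∀ k, (∀ l, k < l → e l = code w l) → e k ≤ code w k
  lead : cf f (code w) = 1

lemma code_rev {n : ℕ} (k : Fin n) : code (Fin.revPerm : Equiv.Perm (Fin n)) k = n - 1 - k := by
  apply code_tail _ 0 _ _ (by omega)
  intro k l hkl _
  simp only [Fin.revPerm_apply, Fin.rev_lt_rev]
  omega

lemma good_rev {n : ℕ} :
    Good (Fin.revPerm : Equiv.Perm (Fin n)) (∏ i : Fin n, X i ^ (n - 1 - (i : ℕ))) := by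
  classical
  have key : ∀ e : Fin n → ℕ, cf (∏ i : Fin n, X i ^ (n - 1 - (i : ℕ)) : MvPolynomial (Fin n) ℤ) e =
      if e = code Fin.revPerm then 1 else 0 := by
    intro e
    have : (∏ i : Fin n, X i ^ (n - 1 - (i : ℕ)) : MvPolynomial (Fin n) ℤ) =
        monomial (Finsupp.equivFunOnFinite.symm (code Fin.revPerm)) 1 := by
      rw [monomial_eq, Finsupp.prod_fintype _ _ (by simp)]
      simp [code_rev]
    rw [this, cf, coeff_monomial]
    simp [eq_comm]
  constructor
  · intro e he k
    rw [key] at he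
    have : e = code Fin.revPerm := by by_contra h; simp [h] at he
    rw [this, code_rev]
  · intro e he k _
    rw [key] at he
    have : e = code Fin.revPerm := by by_contra h; simp [h] at he
    rw [this]
  · rw [key]; simp

lemma good_step {n : ℕ} (w : Equiv.Perm (Fin n)) (i j : Fin n) (hij : (i : ℕ) + 1 = j)
    (hw : w i < w j) (htail : ∀ k l : Fin n, (k : ℕ) + 1 = l → (j : ℕ) ≤ k → w l < w k)
    (f g : MvPolynomial (Fin n) ℤ) (h : (X i - X j) * f = g - rename (Equiv.swap i j) g)
    (hg : Good (w * Equiv.swap i j) g) : Good w f := by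
  have hne : i ≠ j := by intro h; subst h; omega
  have hjn := j.isLt
  have ct : ∀ k : Fin n, j ≤ k → code w k = n - 1 - k := fun k hk => code_tail w j htail k hk
  have ci := code_swap_left w i j hij hw
  have cj := code_swap_right w i j hij hw
  have co := code_swap_of_ne w i j hij
  have cjj := ct j le_rfl
  have pre : ∀ e : Fin n → ℕ, cf f e ≠ 0 →
    ∃ d : Fin n → ℕ, cf g d ≠ 0 ∧ (∀ k, k ≠ i → k ≠ j → d k = e k) ∧ d i + d j = e i + e j + 1 ∧
      (e j + 1 ≤ d i ∨ e j + 1 ≤ d j) := by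
    intro e he
    obtain ⟨d, hd, hd1, hd2, hd3⟩ := dd_pre hne h _ (e ∘ Equiv.swap i j) rfl
      (by rw [dd_symm hne h]; exact he)
    refine ⟨d, hd, ?_, ?_, ?_⟩
    · intro k hi hj; rw [hd1 k hi hj]; simp [Equiv.swap_apply_of_ne_of_ne hi hj]
    · rw [hd2]; simp; omega
    · simpa using hd3
  have stair : ∀ e, cf f e ≠ 0 → ∀ k, e k ≤ n - 1 - k := by
    intro e he k
    by_cases hj : k = j
    · subst hj
      obtain ⟨d, hd, hd1, hd2, hd3⟩ := pre e he
      have h1 := hg.stair d hd i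
      have h2 := hg.stair d hd k
      omega
    · obtain ⟨d, hd, hd1, hd2, hd3⟩ := dd_pre hne h _ e rfl he
      by_cases hi : k = i
      · subst hi
        have h1 := hg.stair d hd k
        have h2 := hg.stair d hd j
        omega
      · rw [← hd1 k hi hj]
        exact hg.stair d hd k
  constructor
  · exact stair
  · intro e he k hk
    by_cases hjk : j ≤ k
    · rw [ct k hjk]; exact stair e he k
    · have hej := hk j (not_le.1 hjk)
      obtain ⟨d, hd, hd1, hd2, hd3⟩ := pre e he
      have h1 := hg.stair d hd i
      have h2 := hg.stair d hd j
      have hdi : d i = n - 1 - i := by omega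
      have hdj : d j = e i := by omega
      by_cases hki : k = i
      · subst hki
        have := hg.rl d hd j (fun l hl => by
          have hl1 : l ≠ k := by omega
          have hl2 : l ≠ j := by omega
          rw [hd1 l hl1 hl2, hk l (by omega), co l hl1 hl2])
        omega
      · have hkj : k ≠ j := by omega
        have := hg.rl d hd k (fun l hl => by
          by_cases hl1 : l = i
          · subst hl1; omega
          · by_cases hl2 : l = j
            · subst hl2
              have := hk i (by omega)
              omega
            · rw [hd1 l hl1 hl2, hk l (by omega), co l hl1 hl2])
        rw [hd1 k hki hkj, co k hki hkj] at this
        exact this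
  · have hc' : code (w * Equiv.swap i j) = Function.update (code w ∘ Equiv.swap i j) i (code w j + 1) := by
      ext k
      by_cases hi : k = i
      · subst hi; simp [ci]
      · by_cases hj : k = j
        · subst hj; simp [hi, cj]
        · simp [hi, Equiv.swap_apply_of_ne_of_ne hi hj, co k hi hj]
    have hr := dd_rel h (code (w * Equiv.swap i j))
    have z1 : cf g (code (w * Equiv.swap i j) ∘ Equiv.swap i j) = 0 := by
      by_contra hz
      have := hg.stair _ hz j
      simp at this
      omega
    have z2 : cf f (Function.update (code (w * Equiv.swap i j)) j (code (w * Equiv.swap i j) j - 1)) = 0 := by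
      by_contra hz
      rw [← dd_symm hne h] at hz
      have := stair _ hz j
      simp [hne] at this
      omega
    rw [z1, z2, hg.lead, ci, if_pos (by omega)] at hr
    simp only [ite_self, sub_zero, Nat.add_sub_cancel] at hr
    rw [← dd_symm hne h, ← hr, hc']
    congr 1
    ext k
    by_cases hi : k = i
    · subst hi; simp
    · simp [hi]

lemma good_all {n : ℕ} (S : Equiv.Perm (Fin n) → MvPolynomial (Fin n) ℤ)
    (hS : IsSchubertFamily S) (m : ℕ) : ∀ w : Equiv.Perm (Fin n),
    ∑ k : Fin n, (k : ℕ) * (w k : ℕ) = m → Good w (S w) := by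
  induction m using Nat.strong_induction_on with
  | _ m ih =>
    intro w hm
    by_cases hw : w = Fin.revPerm
    · subst hw; rw [hS.1]; exact good_rev
    · obtain ⟨i, j, hij, hwij, ht⟩ := exists_last_ascent w hw
      exact good_step w i j hij hwij ht _ _ (hS.2 w i j hij hwij)
        (ih _ (by rw [← hm]; exact measure_swap w i j hij hwij) _ rfl)

lemma good {n : ℕ} {S : Equiv.Perm (Fin n) → MvPolynomial (Fin n) ℤ}
    (hS : IsSchubertFamily S) (w : Equiv.Perm (Fin n)) : Good w (S w) := good_all S hS _ w rfl

lemma swap_symm {n : ℕ} {S : Equiv.Perm (Fin n) → MvPolynomial (Fin n) ℤ}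
    (hS : IsSchubertFamily S) (w : Equiv.Perm (Fin n)) (d : ℕ) : ∀ (p q : Fin n),
    (p : ℕ) + d + 1 = q → (∀ k l : Fin n, p ≤ k → k < l → l ≤ q → w k < w l) →
    ∀ e : Fin n → ℕ, cf (S w) (e ∘ Equiv.swap p q) = cf (S w) e := by
  induction d with
  | zero =>
    intro p q hpq hw e
    exact dd_symm (by intro h; subst h; omega)
      (hS.2 w p q hpq (hw p q le_rfl (by omega) le_rfl)) e
  | succ d ih =>
    intro p q hpq hw e
    obtain ⟨r, hr⟩ : ∃ r : Fin n, (r : ℕ) + 1 = q := ⟨⟨q - 1, by omega⟩, by simp; omega⟩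
    have hrq : r ≠ q := by intro h; subst h; omega
    have h1 : ∀ e : Fin n → ℕ, cf (S w) (e ∘ Equiv.swap r q) = cf (S w) e := fun e =>
      dd_symm hrq (hS.2 w r q hr (hw r q (by omega) (by omega) le_rfl)) e
    have h2 := ih p r (by omega) (fun k l hk hkl hl => hw k l hk hkl (by omega))
    have hpr : p ≠ r := by intro h; subst h; omega
    have hpq : p ≠ q := by intro h; subst h; omega
    have : e ∘ Equiv.swap p q = ((e ∘ Equiv.swap r q) ∘ Equiv.swap p r) ∘ Equiv.swap r q := by
      ext k
      simp only [Function.comp_apply]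
      congr 1
      simp only [Equiv.swap_apply_def]
      split_ifs <;> simp_all
    rw [this, h1, h2, h1]

lemma adj_coeff {n : ℕ} {S : Equiv.Perm (Fin n) → MvPolynomial (Fin n) ℤ}
    (hS : IsSchubertFamily S) (w : Equiv.Perm (Fin n)) (i j : Fin n) (hij : (i : ℕ) + 1 = j)
    (hw : w i < w j) (hc : code w i + 1 ≤ code w j) :
    cf (S w) (Function.update (Function.update (code w) i (code w i + 1)) j (code w j - 1)) = 1 := by
  have hne : i ≠ j := by intro h; subst h; omega
  have h := hS.2 w i j hij hw
  have ci := code_swap_left w i j hij hw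
  have cj := code_swap_right w i j hij hw
  have co := code_swap_of_ne w i j hij
  have hg := good hS (w * Equiv.swap i j)
  have hr := dd_rel h (Function.update (code w ∘ Equiv.swap i j) j (code w i + 1))
  have z1 : cf (S (w * Equiv.swap i j)) (Function.update (code w ∘ Equiv.swap i j) j (code w i + 1)) = 0 := by
    by_contra hz
    have := hg.rl _ hz j (fun l hl => by
      have hl1 : l ≠ i := by omega
      have hl2 : l ≠ j := by omega
      simp [hl2, Equiv.swap_apply_of_ne_of_ne hl1 hl2, co l hl1 hl2])
    simp at this
    omega
  have z2 : cf (S (w * Equiv.swap i j)) (Function.update (code w ∘ Equiv.swap i j) j (code w i + 1) ∘ Equiv.swap i j) = 0 := by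
    by_contra hz
    have := hg.rl _ hz j (fun l hl => by
      have hl1 : l ≠ i := by omega
      have hl2 : l ≠ j := by omega
      simp [hl2, Equiv.swap_apply_of_ne_of_ne hl1 hl2, co l hl1 hl2])
    simp [hne] at this
    omega
  rw [z1, z2, if_pos (by simp [hne]; omega), if_pos (by simp)] at hr
  have e1 : Function.update (Function.update (code w ∘ Equiv.swap i j) j (code w i + 1)) j
      (Function.update (code w ∘ Equiv.swap i j) j (code w i + 1) j - 1) = code w ∘ Equiv.swap i j := by
    ext k
    by_cases hk : k = j
    · subst hk; simp
    · simp [hk]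
  rw [e1, dd_symm hne h, (good hS w).lead] at hr
  have e2 : Function.update (Function.update (code w ∘ Equiv.swap i j) j (code w i + 1)) i
      (Function.update (code w ∘ Equiv.swap i j) j (code w i + 1) i - 1) =
      Function.update (Function.update (code w) i (code w i + 1)) j (code w j - 1) ∘ Equiv.swap i j := by
    ext k
    by_cases hk : k = j
    · subst hk; simp [hne, hne.symm]
    · by_cases hk' : k = i
      · subst hk'; simp [hne]
      · simp [hk, hk', Equiv.swap_apply_of_ne_of_ne hk' hk]
  rw [e2, dd_symm hne h] at hr
  linarith

lemma window_coeff {n : ℕ} {S : Equiv.Perm (Fin n) → MvPolynomial (Fin n) ℤ}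
    (hS : IsSchubertFamily S) (d : ℕ) : ∀ (w : Equiv.Perm (Fin n)) (a b : Fin n),
    (a : ℕ) + d + 1 = b → (∀ k l : Fin n, a ≤ k → k < l → l ≤ b → w k < w l) →
    (∀ k, a < k → k < b → code w k = code w a + 1) → code w b = code w a + 2 →
    cf (S w) (Function.update (Function.update (code w) a (code w a + 1)) b (code w b - 1)) =
      d + 1 := by
  induction d with
  | zero =>
    intro w a b hab hw hc hb
    rw [adj_coeff hS w a b hab (hw a b le_rfl (by omega) le_rfl) (by omega)]
    simp
  | succ d ih =>
    intro w a b hab hw hc hb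
    obtain ⟨r, hr⟩ : ∃ r : Fin n, (a : ℕ) + 1 = r := ⟨⟨a + 1, by omega⟩, rfl⟩
    have har : a ≠ r := by intro h; subst h; omega
    have hrb : r ≠ b := by intro h; subst h; omega
    have hab' : a ≠ b := by intro h; subst h; omega
    have hwar := hw a r le_rfl (by omega) (by omega)
    have h := hS.2 w a r hr hwar
    have ci := code_swap_left w a r hr hwar
    have cj := code_swap_right w a r hr hwar
    have co := code_swap_of_ne w a r hr
    have hcr := hc r (by omega) (by omega)
    have hw' : ∀ k l : Fin n, r ≤ k → k < l → l ≤ b →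
        (w * Equiv.swap a r) k < (w * Equiv.swap a r) l := by
      intro k l hk hkl hl
      have hl1 : l ≠ a := by omega
      have hl2 : l ≠ r := by omega
      rw [Equiv.Perm.mul_apply, Equiv.Perm.mul_apply, Equiv.swap_apply_of_ne_of_ne hl1 hl2]
      by_cases hkr : k = r
      · subst hkr
        rw [Equiv.swap_apply_right]
        exact hw a l le_rfl (by omega) hl
      · rw [Equiv.swap_apply_of_ne_of_ne (by omega) hkr]
        exact hw k l (by omega) hkl hl
    have hIH := ih (w * Equiv.swap a r) r b (by omega) hw' (by
      intro k hk hkb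
      rw [cj, co k (by omega) (by omega), hc k (by omega) hkb]) (by
      rw [cj, co b hab'.symm hrb.symm, hb])
    set p := code w a with hp
    set E : Fin n → ℕ := Function.update (Function.update (Function.update (code w) a (p + 2)) r (p + 1)) b (p + 1) with hE
    have e0 : Function.update (Function.update (code (w * Equiv.swap a r)) r
        (code (w * Equiv.swap a r) r + 1)) b (code (w * Equiv.swap a r) b - 1) = E := by
      ext k
      by_cases hkb : k = b
      · subst hkb; simp [hE, co k hab'.symm hrb.symm, hb]
      · by_cases hkr : k = r
        · subst hkr; simp [hE, hkb, cj]
        · by_cases hka : k = a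
          · subst hka; simp [hE, hkb, hkr, ci, hcr]
          · simp [hE, hkb, hkr, hka, co k hka hkr]
    rw [e0] at hIH
    have hr := dd_rel h E
    have Ea : E a = p + 2 := by simp [hE, hab', har]
    have Er : E r = p + 1 := by simp [hE, hrb]
    rw [Ea, Er, if_pos (by omega), if_pos (by omega), hIH] at hr
    have e1 : Function.update E a (p + 2 - 1) =
        Function.update (Function.update (code w) a (p + 1)) b (code w b - 1) := by
      ext k
      by_cases hkb : k = b
      · subst hkb; simp [hE, hab'.symm, hb]
      · by_cases hkr : k = r
        · subst hkr; simp [hE, hkb, har.symm, hcr]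
        · by_cases hka : k = a
          · subst hka; simp [hkb]
          · simp [hE, hkb, hkr, hka]
    have e2 : (Function.update E r (p + 1 - 1) ∘ Equiv.swap a r) ∘ Equiv.swap r b = code w := by
      ext k
      simp only [Function.comp_apply]
      by_cases hkb : k = b
      · subst hkb; simp [har, Ea, hb]
      · by_cases hkr : k = r
        · subst hkr; simp [Equiv.swap_apply_of_ne_of_ne hab'.symm hrb.symm, hE, hrb.symm, hcr]
        · rw [Equiv.swap_apply_of_ne_of_ne hkr hkb]
          by_cases hka : k = a
          · subst hka; simp [hp]
          · rw [Equiv.swap_apply_of_ne_of_ne hka hkr]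
            simp [hE, hkb, hkr, hka]
    have s2 : cf (S w) (Function.update E r (p + 1 - 1)) = 1 := by
      rw [← dd_symm har h, ← swap_symm hS w (b - r - 1) r b (by omega)
        (fun k l hk => hw k l (by omega)), e2, (good hS w).lead]
    have z : cf (S (w * Equiv.swap a r)) (E ∘ Equiv.swap a r) = 0 := by
      rw [← swap_symm hS (w * Equiv.swap a r) (b - r - 1) r b (by omega) hw']
      by_contra hz
      have := (good hS (w * Equiv.swap a r)).rl _ hz r (fun l hl => by
        have hla : l ≠ a := by omega
        have hlr : l ≠ r := by omega
        rw [co l hla hlr]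
        simp only [Function.comp_apply]
        by_cases hlb : l = b
        · subst hlb; simp [Ea, hb]
        · rw [Equiv.swap_apply_of_ne_of_ne hlr hlb, Equiv.swap_apply_of_ne_of_ne hla hlr]
          simp [hE, hlb, hlr, hla])
      simp [Equiv.swap_apply_of_ne_of_ne hab'.symm hrb.symm, hE, cj] at this
    rw [e1, s2, z] at hr
    push_cast
    linarith

/-! ### The upper bound polynomial -/

def wt {n : ℕ} (C : Fin n → Finset (Fin n)) (i : Fin n) : ℕ :=
  ∑ j, if i ∈ C j then 1 else 0

lemma xDiagram_eq {n : ℕ} (C : Fin n → Finset (Fin n)) :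
    xDiagram C = monomial (Finsupp.equivFunOnFinite.symm (wt C)) 1 := by
  classical
  rw [monomial_eq, Finsupp.prod_fintype _ _ (by simp)]
  simp only [xDiagram, map_one, one_mul, Finsupp.equivFunOnFinite_symm_apply_apply, wt]
  have : ∀ j, ∏ i ∈ C j, (X i : MvPolynomial (Fin n) ℤ) =
      ∏ i, X i ^ (if i ∈ C j then 1 else 0) := by
    intro j
    simp only [pow_ite, pow_one, pow_zero, Finset.prod_ite_mem, Finset.univ_inter]
  simp_rw [this]
  rw [Finset.prod_comm]
  simp_rw [Finset.prod_pow_eq_pow_sum]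

lemma cf_MaxPoly_ge {n : ℕ} (D : Fin n → Finset (Fin n)) (e : Fin n → ℕ)
    (T : Finset (Fin n → Finset (Fin n))) (hT : ∀ C ∈ T, DiagramLE C D ∧ wt C = e) :
    (T.card : ℤ) ≤ cf (MaxPoly D) e := by
  classical
  unfold cf MaxPoly
  rw [coeff_sum]
  have h1 : (T.card : ℤ) = ∑ C ∈ T, coeff (Finsupp.equivFunOnFinite.symm e) (xDiagram C) := by
    rw [Finset.card_eq_sum_ones]
    push_cast
    apply Finset.sum_congr rfl
    intro C hC
    rw [xDiagram_eq, coeff_monomial, (hT C hC).2, if_pos rfl]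
  rw [h1]
  apply Finset.sum_le_sum_of_subset_of_nonneg
  · intro C hC; simp [(hT C hC).1]
  · intro C _ _
    rw [xDiagram_eq, coeff_monomial]
    split_ifs <;> simp

lemma wt_rothe {n : ℕ} (w : Equiv.Perm (Fin n)) : wt (rothe w) = code w := by
  classical
  ext i
  unfold wt code
  rw [← Finset.card_filter]
  symm
  refine Finset.card_bij (fun k _ => w k) ?_ ?_ ?_
  · intro k; simp [rothe]; tauto
  · intro a _ b _ h; simpa using h
  · intro j hj
    simp [rothe] at hj
    exact ⟨w.symm j, by simp [hj], by simp⟩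

lemma gale_of_map {n : ℕ} (C D : Finset (Fin n)) (hcard : C.card = D.card)
    (φ : Fin n → Fin n) (hφ : Set.InjOn φ D) (hm : ∀ d ∈ D, φ d ∈ C) (hle : ∀ d ∈ D, φ d ≤ d) :
    GaleLE C D := by
  classical
  refine ⟨hcard, ?_⟩
  intro k hC hD
  by_contra hlt
  rw [not_le] at hlt
  have h1 : ((Finset.Iic (⟨k, hD⟩ : Fin D.card)).image
      (fun t => φ (D.orderIsoOfFin rfl t : Fin n))).card = k + 1 := by
    rw [Finset.card_image_of_injOn, Fin.card_Iic]
    intro s _ t _ hst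
    have := hφ (D.orderIsoOfFin rfl s).2 (D.orderIsoOfFin rfl t).2 hst
    exact (D.orderIsoOfFin rfl).injective (Subtype.ext this)
  have h2 : ((Finset.Iio (⟨k, hC⟩ : Fin C.card)).image
      (fun t => (C.orderIsoOfFin rfl t : Fin n))).card ≤ k :=
    Finset.card_image_le.trans (by rw [Fin.card_Iio])
  have h3 : ((Finset.Iic (⟨k, hD⟩ : Fin D.card)).image
      (fun t => φ (D.orderIsoOfFin rfl t : Fin n))) ⊆ ((Finset.Iio (⟨k, hC⟩ : Fin C.card)).image
      (fun t => (C.orderIsoOfFin rfl t : Fin n))) := by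
    intro x hx
    simp only [Finset.mem_image, Finset.mem_Iic, Finset.mem_Iio] at hx ⊢
    obtain ⟨t, ht, rfl⟩ := hx
    have hmem := hm _ (D.orderIsoOfFin rfl t).2
    refine ⟨(C.orderIsoOfFin rfl).symm ⟨_, hmem⟩, ?_, by simp⟩
    rw [OrderIso.symm_apply_lt, ← Subtype.coe_lt_coe]
    refine lt_of_le_of_lt (hle _ (D.orderIsoOfFin rfl t).2) (lt_of_le_of_lt ?_ hlt)
    rw [Subtype.coe_le_coe]
    exact (D.orderIsoOfFin rfl).monotone ht
  have := Finset.card_le_card h3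
  omega

lemma gale_refl {n : ℕ} (D : Finset (Fin n)) : GaleLE D D :=
  ⟨rfl, fun _ _ _ => le_rfl⟩

lemma gale_exchange {n : ℕ} (D : Finset (Fin n)) (x y : Fin n) (hyx : y ≤ x) (hx : x ∈ D)
    (hy : y ∉ D.erase x) : GaleLE (insert y (D.erase x)) D := by
  classical
  apply gale_of_map _ _ _ (fun d => if d = x then y else d)
  · intro s hs t ht hst
    rw [Finset.mem_coe] at hs ht
    rw [Finset.mem_erase] at hy
    grind
  · intro d hd
    simp only [Finset.mem_insert, Finset.mem_erase]
    grind
  · intro d hd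
    grind
  · rw [Finset.card_insert_of_notMem hy, Finset.card_erase_add_one hx]

lemma max_ge {n : ℕ} (D : Fin n → Finset (Fin n)) (a b m M : Fin n) (hab : a < b) (hmM : m ≠ M)
    (ham : a ∉ D m) (hm : ∀ k, a < k → k ≤ b → k ∈ D m) (hb : b ∈ D M)
    (hM : ∀ k, a ≤ k → k < b → k ∉ D M) :
    ((b : ℕ) - (a : ℕ) + 1 : ℤ) ≤ cf (MaxPoly D)
      (Function.update (Function.update (wt D) a (wt D a + 1)) b (wt D b - 1)) := by
  classical
  let F : Fin n → Fin n → Finset (Fin n) := fun t =>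
    Function.update (Function.update D m (if t = a then D m else insert a ((D m).erase t))) M
      (insert t ((D M).erase b))
  have hFM : ∀ t, F t M = insert t ((D M).erase b) := fun t => by simp [F]
  have hFm : ∀ t, F t m = if t = a then D m else insert a ((D m).erase t) := fun t => by
    simp [F, hmM]
  have hFo : ∀ t j, j ≠ m → j ≠ M → F t j = D j := fun t j h1 h2 => by simp [F, h1, h2]
  have hinj : Set.InjOn F (Finset.Icc a b) := by
    intro s hs t ht hst
    have h1 := congrFun hst M
    rw [hFM, hFM] at h1
    have h2 : s ∈ insert t ((D M).erase b) := by rw [← h1]; simp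
    simp only [Finset.coe_Icc, Set.mem_Icc] at hs ht
    simp only [Finset.mem_insert, Finset.mem_erase] at h2
    rcases h2 with h2 | ⟨h2, h3⟩
    · exact h2
    · exact absurd h3 (hM s hs.1 (lt_of_le_of_ne hs.2 h2))
  have hcard : ((Finset.Icc a b).image F).card = (b : ℕ) + 1 - a := by
    rw [Finset.card_image_of_injOn hinj, Fin.card_Icc]
  have := cf_MaxPoly_ge D
    (Function.update (Function.update (wt D) a (wt D a + 1)) b (wt D b - 1))
    ((Finset.Icc a b).image F) (by
      intro C hC
      simp only [Finset.mem_image, Finset.mem_Icc] at hC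
      obtain ⟨t, ⟨hat, htb⟩, rfl⟩ := hC
      constructor
      · intro j
        by_cases hjM : j = M
        · subst hjM
          rw [hFM]
          apply gale_exchange _ _ _ htb hb
          simp only [Finset.mem_erase, not_and]
          intro h
          exact hM t hat (lt_of_le_of_ne htb h)
        · by_cases hjm : j = m
          · subst hjm
            rw [hFm]
            split_ifs with h
            · exact gale_refl _
            · apply gale_exchange _ _ _ hat (hm t (lt_of_le_of_ne hat (Ne.symm h)) htb)
              simp [ham]
          · rw [hFo t j hjm hjM]; exact gale_refl _
      · have split : ∀ (C : Fin n → Finset (Fin n)) (i : Fin n), wt C i =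
            (if i ∈ C m then 1 else 0) + ((if i ∈ C M then 1 else 0) +
              ∑ j ∈ (Finset.univ.erase m).erase M, if i ∈ C j then 1 else 0) := by
          intro C i
          rw [wt, ← Finset.add_sum_erase _ _ (Finset.mem_univ m),
            ← Finset.add_sum_erase _ _ (Finset.mem_erase.2 ⟨hmM.symm, Finset.mem_univ M⟩)]
        ext i
        have hrest : ∑ j ∈ (Finset.univ.erase m).erase M, (if i ∈ F t j then 1 else 0) =
            ∑ j ∈ (Finset.univ.erase m).erase M, if i ∈ D j then 1 else 0 := by
          apply Finset.sum_congr rfl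
          intro j hj
          simp only [Finset.mem_erase] at hj
          rw [hFo t j hj.2.1 hj.1]
        have s1 := split (F t) i
        have s2 := split D i
        rw [hrest, hFm, hFM] at s1
        have hab' : a ≠ b := hab.ne
        have hta : t ≠ a → t ∈ D m := fun h => hm t (lt_of_le_of_ne hat (Ne.symm h)) htb
        have htM : t ≠ b → t ∉ D M := fun h => hM t hat (lt_of_le_of_ne htb h)
        have haM : a ∉ D M := hM a le_rfl hab
        have hbm : b ∈ D m := hm b hab le_rfl
        generalize ∑ j ∈ (Finset.univ.erase m).erase M, (if i ∈ D j then 1 else 0) = R at s1 s2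
        clear hrest split hcard hinj hFM hFm hFo
        by_cases hib : i = b
        · subst hib
          rw [Function.update_self, s1, s2]
          grind
        · rw [Function.update_of_ne hib]
          by_cases hia : i = a
          · subst hia
            rw [Function.update_self, s1, s2]
            grind
          · rw [Function.update_of_ne hia, s1, s2]
            grind)
  rw [hcard] at this
  have hab2 : (a : ℕ) < b := hab
  refine le_trans (le_of_eq ?_) this
  omega

/-- Pattern 1432 or 1423 located with first two positions `a`, `b`. -/
def Bad {n : ℕ} (w : Equiv.Perm (Fin n)) (a b : Fin n) : Prop :=
  a < b ∧ ∃ m M : Fin n, m < M ∧ w a < m ∧ M < w b ∧ b < w.symm m ∧ b < w.symm M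

lemma no_bad {n : ℕ} (w : Equiv.Perm (Fin n))
    (S : Equiv.Perm (Fin n) → MvPolynomial (Fin n) ℤ) (hS : IsSchubertFamily S)
    (h : S w = MaxPoly (rothe w)) (d : ℕ) :
    ∀ a b : Fin n, (b : ℕ) - a = d → ¬ Bad w a b := by
  classical
  induction d using Nat.strong_induction_on with
  | _ d ih =>
    rintro a b hd hbad
    have hmin : ∀ a' b' : Fin n, (b' : ℕ) - a' < d → ¬ Bad w a' b' :=
      fun a' b' h' => ih _ h' a' b' rfl
    obtain ⟨hab, m, M, hmM, ham, hMb, hbm, hbM⟩ := hbad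
    have hin : ∀ m M : Fin n, m < M → w a < m → M < w b → b < w.symm m → b < w.symm M →
        ∀ e, a < e → e < b → m < w e ∧ w e < M := by
      intro m M hmM ham hMb hbm hbM e hae heb
      constructor
      · by_contra hlt
        have hne : w e ≠ m := by rintro rfl; simp at hbm; omega
        exact hmin e b (by omega) ⟨heb, m, M, hmM, by omega, hMb, hbm, hbM⟩
      · by_contra hlt
        have hne : w e ≠ M := by rintro rfl; simp at hbM; omega
        exact hmin a e (by omega) ⟨hae, m, M, hmM, ham, by omega, by omega, by omega⟩
    have hinc : ∀ k l : Fin n, a ≤ k → k < l → l ≤ b → w k < w l := by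
      intro k l hk hkl hl
      by_cases hka : k = a
      · subst hka
        by_cases hlb : l = b
        · subst hlb; omega
        · have := hin m M hmM ham hMb hbm hbM l hkl (by omega)
          omega
      · have h1 := hin m M hmM ham hMb hbm hbM k (by omega) (by omega)
        by_cases hlb : l = b
        · subst hlb; omega
        · have h2 := hin m M hmM ham hMb hbm hbM l (by omega) (by omega)
          by_contra hlt
          have hne : w l ≠ w k := fun h => by have := w.injective h; omega
          exact hmin a k (by omega) ⟨by omega, m, w l, h2.1, ham, by omega, by omega, by simpa using hkl⟩
    have hmax := max_ge (rothe w) a b m M hab hmM.ne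
      (by simp [rothe]; omega)
      (by
        intro k hk hkb
        simp only [rothe, Finset.mem_filter, Finset.mem_univ, true_and]
        refine ⟨?_, by omega⟩
        by_cases hkb' : k = b
        · subst hkb'; omega
        · exact (hin m M hmM ham hMb hbm hbM k hk (by omega)).1)
      (by simp [rothe]; omega)
      (by
        intro k hk hkb
        simp only [rothe, Finset.mem_filter, Finset.mem_univ, true_and, not_and]
        intro h1
        by_cases hka : k = a
        · subst hka; omega
        · have := (hin m M hmM ham hMb hbm hbM k (by omega) hkb).2
          omega)
    rw [← h, wt_rothe] at hmax
    -- rows of the Rothe diagram inside the window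
    let R : Fin n → Finset (Fin n) := fun i => Finset.univ.filter fun j => j < w i ∧ i < w.symm j
    have hR : ∀ i, code w i = (R i).card := by
      intro i
      rw [← wt_rothe]
      simp [wt, R, rothe]
    have hRw : ∀ k, a ≤ k → k ≤ b → ∀ j, j ∈ R k ↔ j < w k ∧ b < w.symm j := by
      intro k hk hkb j
      simp only [R, Finset.mem_filter, Finset.mem_univ, true_and]
      constructor
      · rintro ⟨h1, h2⟩
        refine ⟨h1, ?_⟩
        by_contra h3
        have := hinc k (w.symm j) hk h2 (by omega)
        simp at this
        omega
      · rintro ⟨h1, h2⟩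
        exact ⟨h1, by omega⟩
    have hma : m ∉ R a := by rw [hRw a le_rfl hab.le]; omega
    have hMa : M ∉ R a := by rw [hRw a le_rfl hab.le]; omega
    by_cases hadj : (a : ℕ) + 1 = b
    · have hcode : code w a + 1 ≤ code w b := by
        rw [hR, hR, ← Finset.card_insert_of_notMem hma]
        apply Finset.card_le_card
        intro j hj
        rw [Finset.mem_insert, hRw a le_rfl hab.le] at hj
        rw [hRw b hab.le le_rfl]
        rcases hj with rfl | ⟨h1, h2⟩
        · exact ⟨by omega, hbm⟩
        · exact ⟨by omega, h2⟩
      rw [adj_coeff hS w a b hadj (by omega) hcode] at hmax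
      omega
    · obtain ⟨e, he⟩ : ∃ e : Fin n, (a : ℕ) + 1 = e := ⟨⟨a + 1, by omega⟩, rfl⟩
      have hem := hin m M hmM ham hMb hbm hbM e (by omega) (by omega)
      have huniq : ∀ j, w a < j → j < w b → b < w.symm j → j = m ∨ j = M := by
        intro j h1 h2 h3
        by_contra hj
        rcases lt_trichotomy j m with h4 | h4 | h4
        · have := hin j m h4 h1 (by omega) h3 hbm e (by omega) (by omega)
          omega
        · omega
        · have h5 := hin m j h4 ham h2 hbm h3 e (by omega) (by omega)
          rcases lt_trichotomy j M with h6 | h6 | h6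
          · have := hin j M h6 h1 hMb h3 hbM e (by omega) (by omega)
            omega
          · omega
          · have := hin M j h6 (by omega) h2 hbM h3 e (by omega) (by omega)
            omega
      have hne : ∀ j, b < w.symm j → j ≠ w a := by
        rintro j hj rfl
        simp at hj
        omega
      have hcode1 : ∀ k, a < k → k < b → code w k = code w a + 1 := by
        intro k hk hkb
        have hkm := hin m M hmM ham hMb hbm hbM k hk hkb
        rw [hR, hR, ← Finset.card_insert_of_notMem hma]
        congr 1
        ext j
        rw [Finset.mem_insert, hRw a le_rfl hab.le, hRw k hk.le hkb.le]
        constructor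
        · rintro ⟨h1, h2⟩
          by_cases h3 : j < w a
          · exact Or.inr ⟨h3, h2⟩
          · have h4 := hne j h2
            rcases huniq j (by omega) (by omega) h2 with h5 | h5
            · exact Or.inl h5
            · omega
        · rintro (rfl | ⟨h1, h2⟩)
          · exact ⟨hkm.1, hbm⟩
          · exact ⟨by omega, h2⟩
      have hcode2 : code w b = code w a + 2 := by
        have hMi : M ∉ insert m (R a) := by
          rw [Finset.mem_insert, not_or]; exact ⟨hmM.ne', hMa⟩
        have hcc : (insert M (insert m (R a))).card = (R a).card + 2 := by
          rw [Finset.card_insert_of_notMem hMi, Finset.card_insert_of_notMem hma]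
        rw [hR, hR, ← hcc]
        congr 1
        ext j
        rw [Finset.mem_insert, Finset.mem_insert, hRw a le_rfl hab.le, hRw b hab.le le_rfl]
        constructor
        · rintro ⟨h1, h2⟩
          by_cases h3 : j < w a
          · exact Or.inr (Or.inr ⟨h3, h2⟩)
          · have h4 := hne j h2
            rcases huniq j (by omega) (by omega) h2 with h5 | h5
            · exact Or.inr (Or.inl h5)
            · exact Or.inl h5
        · rintro (rfl | rfl | ⟨h1, h2⟩)
          · exact ⟨hMb, hbM⟩
          · exact ⟨by omega, hbm⟩
          · exact ⟨by omega, h2⟩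
      rw [window_coeff hS (b - a - 1) w a b (by omega) hinc hcode1 hcode2] at hmax
      omega

/-- If the Schubert polynomial `S_w` equals the upper bound `Max_w`, then `w` avoids the
patterns 1432 and 1423. -/
theorem avoids_1432_1423_of_schubert_eq_max (n : ℕ) (hn : 1 ≤ n) (w : Equiv.Perm (Fin n))
    (S : Equiv.Perm (Fin n) → MvPolynomial (Fin n) ℤ) (hS : IsSchubertFamily S)
    (h : S w = MaxPoly (rothe w)) :
    AvoidsPattern w ![1, 4, 3, 2] ∧ AvoidsPattern w ![1, 4, 2, 3] := by
  constructor
  · rintro ⟨f, hf⟩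
    have h01 : f 0 < f 1 := f.strictMono (by decide)
    have h12 : f 1 < f 2 := f.strictMono (by decide)
    have h13 : f 1 < f 3 := f.strictMono (by decide)
    have g1 := (hf 0 3).1 (by decide)
    have g2 := (hf 3 2).1 (by decide)
    have g3 := (hf 2 1).1 (by decide)
    exact no_bad w S hS h _ (f 0) (f 1) rfl
      ⟨h01, w (f 3), w (f 2), g2, g1, g3, by simp [h13], by simp [h12]⟩
  · rintro ⟨f, hf⟩
    have h01 : f 0 < f 1 := f.strictMono (by decide)
    have h12 : f 1 < f 2 := f.strictMono (by decide)
    have h13 : f 1 < f 3 := f.strictMono (by decide)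
    have g1 := (hf 0 2).1 (by decide)
    have g2 := (hf 2 3).1 (by decide)
    have g3 := (hf 3 1).1 (by decide)
    exact no_bad w S hS h _ (f 0) (f 1) rfl
      ⟨h01, w (f 2), w (f 3), g2, g1, g3, by simp [h12], by simp [h13]⟩
end

section
/- Let n ≥ 1 and let w be a permutation of [n]. If w avoids the permutation patterns 1432 and 1423, then the Schubert polynomial S_w(x) equals Max_w(x). -/
open MvPolynomial

/-- Number of elements of `C` below `t`. -/
def cntLT {n : ℕ} (C : Finset (Fin n)) (t : ℕ) : ℕ := (C.filter fun c : Fin n => (c : ℕ) < t).card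

lemma cntLT_le_iff {n : ℕ} (C : Finset (Fin n)) (t k : ℕ) (hk : k < C.card) :
    cntLT C t ≤ k ↔ t ≤ ((C.orderIsoOfFin rfl ⟨k, hk⟩ : Fin n) : ℕ) := by
  have key : cntLT C t = (Finset.univ.filter fun a : Fin C.card =>
      ((C.orderIsoOfFin rfl a : Fin n) : ℕ) < t).card := by
    unfold cntLT
    symm
    refine Finset.card_bij (fun a _ => (C.orderIsoOfFin rfl a : Fin n)) ?_ ?_ ?_
    · intro a ha
      simp only [Finset.mem_filter, Finset.mem_univ, true_and] at ha
      simp only [Finset.mem_filter]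
      exact ⟨(C.orderIsoOfFin rfl a).2, ha⟩
    · intro a _ b _ hab
      exact (C.orderIsoOfFin rfl).injective (Subtype.ext hab)
    · intro b hb
      simp only [Finset.mem_filter] at hb
      refine ⟨(C.orderIsoOfFin rfl).symm ⟨b, hb.1⟩, ?_, ?_⟩
      · simp only [Finset.mem_filter, Finset.mem_univ, true_and, OrderIso.apply_symm_apply]
        exact hb.2
      · simp only [OrderIso.apply_symm_apply]
  rw [key]
  constructor
  · intro h
    by_contra hlt
    push Not at hlt
    have hsub : Finset.Iic (⟨k, hk⟩ : Fin C.card) ⊆ (Finset.univ.filter fun a : Fin C.card =>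
      ((C.orderIsoOfFin rfl a : Fin n) : ℕ) < t) := by
      intro a ha
      simp only [Finset.mem_Iic] at ha
      simp only [Finset.mem_filter, Finset.mem_univ, true_and]
      have : (C.orderIsoOfFin rfl a : Fin n) ≤ (C.orderIsoOfFin rfl ⟨k, hk⟩ : Fin n) :=
        (C.orderIsoOfFin rfl).monotone ha
      exact lt_of_le_of_lt this hlt
    have := Finset.card_le_card hsub
    rw [Fin.card_Iic] at this
    simp only at this
    omega
  · intro h
    have hsub : (Finset.univ.filter fun a : Fin C.card =>
      ((C.orderIsoOfFin rfl a : Fin n) : ℕ) < t) ⊆ Finset.Iio (⟨k, hk⟩ : Fin C.card) := by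
      intro a ha
      simp only [Finset.mem_filter, Finset.mem_univ, true_and] at ha
      simp only [Finset.mem_Iio]
      by_contra hle
      push Not at hle
      have : (C.orderIsoOfFin rfl ⟨k, hk⟩ : Fin n) ≤ (C.orderIsoOfFin rfl a : Fin n) :=
        (C.orderIsoOfFin rfl).monotone hle
      have : ((C.orderIsoOfFin rfl ⟨k, hk⟩ : Fin n) : ℕ) ≤ (C.orderIsoOfFin rfl a : Fin n) := this
      omega
    have := Finset.card_le_card hsub
    rw [Fin.card_Iio] at this
    exact this

lemma galeLE_iff {n : ℕ} (C D : Finset (Fin n)) :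
    GaleLE C D ↔ C.card = D.card ∧ ∀ t, cntLT D t ≤ cntLT C t := by
  constructor
  · rintro ⟨hc, h⟩
    refine ⟨hc, fun t => ?_⟩
    by_contra hlt
    push Not at hlt
    have hD : cntLT C t < D.card := lt_of_lt_of_le hlt (Finset.card_le_card (Finset.filter_subset _ _))
    have hC : cntLT C t < C.card := hc ▸ hD
    have h1 := (cntLT_le_iff C t _ hC).1 le_rfl
    have h2 : ((C.orderIsoOfFin rfl ⟨_, hC⟩ : Fin n) : ℕ) ≤ (D.orderIsoOfFin rfl ⟨_, hD⟩ : Fin n) :=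
      h _ hC hD
    have h3 := (cntLT_le_iff D t _ hD).2 (h1.trans h2)
    omega
  · rintro ⟨hc, h⟩
    refine ⟨hc, fun k hC hD => ?_⟩
    have h1 := (cntLT_le_iff C _ k hC).2 le_rfl
    exact (cntLT_le_iff D _ k hD).1 ((h _).trans h1)

lemma cntLT_succ {n : ℕ} (C : Finset (Fin n)) (i : Fin n) :
    cntLT C ((i : ℕ) + 1) = cntLT C i + if i ∈ C then 1 else 0 := by
  unfold cntLT
  split_ifs with h
  · rw [← Finset.card_insert_of_notMem (a := i)
      (s := C.filter fun c : Fin n => (c : ℕ) < i) (by simp)]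
    congr 1
    ext c
    simp only [Finset.mem_filter, Finset.mem_insert, Fin.ext_iff]
    constructor
    · rintro ⟨h1, h2⟩
      by_cases hci : (c : ℕ) = i
      · exact Or.inl hci
      · exact Or.inr ⟨h1, by omega⟩
    · rintro (h1 | ⟨h1, h2⟩)
      · have : c = i := Fin.ext h1
        subst this
        exact ⟨h, by omega⟩
      · exact ⟨h1, by omega⟩
  · rw [add_zero]
    congr 1
    apply Finset.filter_congr
    intro c hc
    have : (c : ℕ) ≠ i := fun h' => h (Fin.ext h' ▸ hc)
    omega

/-- Image of a set under the transposition of `i` and `j`. -/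
def swapSet {n : ℕ} (i j : Fin n) (C : Finset (Fin n)) : Finset (Fin n) :=
  C.map (Equiv.swap i j).toEmbedding

lemma mem_swapSet {n : ℕ} (i j : Fin n) (C : Finset (Fin n)) (a : Fin n) :
    a ∈ swapSet i j C ↔ Equiv.swap i j a ∈ C := by
  unfold swapSet
  rw [Finset.mem_map_equiv, Equiv.symm_swap]

lemma swapSet_swapSet {n : ℕ} (i j : Fin n) (C : Finset (Fin n)) :
    swapSet i j (swapSet i j C) = C := by
  ext a
  simp [mem_swapSet]

lemma cntLT_swapSet {n : ℕ} (i j : Fin n) (hij : (i : ℕ) + 1 = j) (C : Finset (Fin n)) (t : ℕ)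
    (ht : t ≠ j) : cntLT (swapSet i j C) t = cntLT C t := by
  unfold cntLT
  rw [← Finset.card_map (Equiv.swap i j).toEmbedding (s := C.filter _)]
  congr 1
  ext a
  rw [Finset.mem_map_equiv, Equiv.symm_swap, Finset.mem_filter, Finset.mem_filter, mem_swapSet]
  have : ((a : ℕ) < t) ↔ ((Equiv.swap i j a : Fin n) : ℕ) < t := by
    rw [Equiv.swap_apply_def]
    split_ifs with h1 h2
    · subst h1; omega
    · subst h2; omega
    · rfl
  rw [this]

lemma card_swapSet {n : ℕ} (i j : Fin n) (C : Finset (Fin n)) :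
    (swapSet i j C).card = C.card := by
  simp [swapSet]

/-- The collected numerical data at the swap. -/
lemma cntLT_data {n : ℕ} (i j : Fin n) (hij : (i : ℕ) + 1 = j) (C : Finset (Fin n)) :
    cntLT C j = cntLT C i + (if i ∈ C then 1 else 0) ∧
    cntLT C (j + 1) = cntLT C i + (if i ∈ C then 1 else 0) + (if j ∈ C then 1 else 0) := by
  rw [cntLT_succ C j, ← hij, cntLT_succ C i]
  exact ⟨rfl, rfl⟩

lemma galeLE_swap_of {n : ℕ} (i j : Fin n) (hij : (i : ℕ) + 1 = j) (C D : Finset (Fin n))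
    (hD : i ∈ D → j ∈ D) (h : GaleLE C D) : GaleLE (swapSet i j C) D := by
  rw [galeLE_iff] at h ⊢
  refine ⟨by rw [card_swapSet]; exact h.1, fun t => ?_⟩
  by_cases ht : t = j
  · subst ht
    have e1 := cntLT_data i j hij C
    have e2 := cntLT_data i j hij D
    have e3 := cntLT_data i j hij (swapSet i j C)
    have e4 := cntLT_swapSet i j hij C i (by omega)
    have h1 := h.2 i
    have h2 := h.2 j
    have h3 := h.2 (j + 1)
    simp only [mem_swapSet, Equiv.swap_apply_left, Equiv.swap_apply_right] at e3
    by_cases a1 : i ∈ C <;> by_cases a2 : j ∈ C <;> by_cases a3 : i ∈ D <;>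
      by_cases a4 : j ∈ D <;> simp [a1, a2, a3, a4] at * <;> omega
  · rw [cntLT_swapSet i j hij C t ht]
    exact h.2 t

lemma galeLE_swapSet_of_le {n : ℕ} (i j : Fin n) (hij : (i : ℕ) + 1 = j) (C F : Finset (Fin n))
    (hi : i ∈ F) (hj : j ∉ F) (h : GaleLE C F) : GaleLE C (swapSet i j F) := by
  rw [galeLE_iff] at h ⊢
  refine ⟨by rw [card_swapSet]; exact h.1, fun t => ?_⟩
  by_cases ht : t = j
  · subst ht
    have e2 := cntLT_data i j hij F
    have e3 := cntLT_data i j hij (swapSet i j F)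
    have e4 := cntLT_swapSet i j hij F i (by omega)
    have h2 := h.2 j
    simp only [mem_swapSet, Equiv.swap_apply_left, Equiv.swap_apply_right] at e3
    simp [hi, hj] at *
    omega
  · rw [cntLT_swapSet i j hij F t ht]
    exact h.2 t

lemma galeLE_of_swapSet {n : ℕ} (i j : Fin n) (hij : (i : ℕ) + 1 = j) (C F : Finset (Fin n))
    (hi : i ∈ F) (hj : j ∉ F) (hC : j ∈ C → i ∈ C) (h : GaleLE C (swapSet i j F)) :
    GaleLE C F := by
  rw [galeLE_iff] at h ⊢
  refine ⟨by rw [← card_swapSet i j F]; exact h.1, fun t => ?_⟩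
  by_cases ht : t = j
  · subst ht
    have e1 := cntLT_data i j hij C
    have e2 := cntLT_data i j hij F
    have e4 := cntLT_swapSet i j hij F i (by omega)
    have e5 := cntLT_swapSet i j hij F (j + 1) (by omega)
    have h1 := h.2 i
    have h3 := h.2 (j + 1)
    by_cases a1 : i ∈ C <;> by_cases a2 : j ∈ C <;> simp [a1, a2, hi, hj] at * <;> omega
  · rw [← cntLT_swapSet i j hij F t ht]
    exact h.2 t

open scoped Classical in
/-- The single-column polynomial. -/
noncomputable def colPoly {n : ℕ} (D : Finset (Fin n)) : MvPolynomial (Fin n) ℤ :=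
  ∑ C ∈ Finset.univ.filter (fun C : Finset (Fin n) => GaleLE C D), ∏ i ∈ C, X i

lemma maxPoly_eq {n : ℕ} (D : Fin n → Finset (Fin n)) : MaxPoly D = ∏ j, colPoly (D j) := by
  classical
  unfold MaxPoly colPoly xDiagram
  rw [Finset.prod_univ_sum]
  apply Finset.sum_congr
  · ext C
    simp only [Finset.mem_filter, Finset.mem_univ, true_and, Fintype.mem_piFinset]
    rfl
  · intro _ _
    rfl

lemma rename_mono {n : ℕ} (i j : Fin n) (C : Finset (Fin n)) :
    rename (Equiv.swap i j) (∏ a ∈ C, (X a : MvPolynomial (Fin n) ℤ)) =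
      ∏ a ∈ swapSet i j C, X a := by
  simp [swapSet, map_prod, Finset.prod_map]

lemma rename_colPoly {n : ℕ} (i j : Fin n) (hij : (i : ℕ) + 1 = j) (D : Finset (Fin n))
    (hD : i ∈ D → j ∈ D) : rename (Equiv.swap i j) (colPoly D) = colPoly D := by
  classical
  unfold colPoly
  rw [map_sum]
  simp only [rename_mono]
  refine Finset.sum_bij' (fun C _ => swapSet i j C) (fun C _ => swapSet i j C) ?_ ?_ ?_ ?_ ?_
  · intro C hC
    simp only [Finset.mem_filter, Finset.mem_univ, true_and] at hC ⊢
    exact galeLE_swap_of i j hij C D hD hC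
  · intro C hC
    simp only [Finset.mem_filter, Finset.mem_univ, true_and] at hC ⊢
    exact galeLE_swap_of i j hij C D hD hC
  · intro C _
    exact swapSet_swapSet i j C
  · intro C _
    exact swapSet_swapSet i j C
  · intro C _
    rfl

lemma mono_swap {n : ℕ} (i j : Fin n) (C : Finset (Fin n)) (hi : i ∉ C) (hj : j ∈ C) :
    (X i : MvPolynomial (Fin n) ℤ) * ∏ a ∈ C, X a = X j * ∏ a ∈ swapSet i j C, X a := by
  have h1 : insert i C = insert j (swapSet i j C) := by
    ext a
    simp only [Finset.mem_insert, mem_swapSet, Equiv.swap_apply_def]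
    split_ifs with h1 h2
    · subst h1; simp [hj]
    · subst h2; simp [hj]
    · simp [h1, h2]
  rw [← Finset.prod_insert hi, h1, Finset.prod_insert]
  rw [mem_swapSet, Equiv.swap_apply_right]
  exact hi

lemma colPoly_step {n : ℕ} (i j : Fin n) (hij : (i : ℕ) + 1 = j) (F : Finset (Fin n))
    (hi : i ∈ F) (hj : j ∉ F) :
    (X i - X j) * colPoly (swapSet i j F) =
      X i * colPoly F - X j * rename (Equiv.swap i j) (colPoly F) := by
  classical
  have hsym := rename_colPoly i j hij (swapSet i j F) (by simp [mem_swapSet, hi])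
  have h0 : (X i - X j) * colPoly (swapSet i j F) = X i * colPoly (swapSet i j F) -
      X j * rename (Equiv.swap i j) (colPoly (swapSet i j F)) := by
    rw [hsym]; ring
  rw [h0]
  unfold colPoly
  simp only [map_sum, rename_mono, Finset.mul_sum, ← Finset.sum_sub_distrib]
  symm
  apply Finset.sum_subset
  · intro C hC
    simp only [Finset.mem_filter, Finset.mem_univ, true_and] at hC ⊢
    exact galeLE_swapSet_of_le i j hij C F hi hj hC
  · intro C hC hC'
    simp only [Finset.mem_filter, Finset.mem_univ, true_and] at hC hC'
    have hn : ¬ (j ∈ C → i ∈ C) := fun h => hC' (galeLE_of_swapSet i j hij C F hi hj h hC)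
    push Not at hn
    rw [mono_swap i j C hn.2 hn.1, sub_self]

lemma colPoly_initial {n : ℕ} (D : Finset (Fin n)) (m : ℕ) (hD : ∀ a : Fin n, a ∈ D ↔ (a : ℕ) < m) :
    colPoly D = ∏ a ∈ D, X a := by
  classical
  unfold colPoly
  have : Finset.univ.filter (fun C : Finset (Fin n) => GaleLE C D) = {D} := by
    ext C
    simp only [Finset.mem_filter, Finset.mem_univ, true_and, Finset.mem_singleton]
    constructor
    · intro h
      rw [galeLE_iff] at h
      have h1 := h.2 m
      have h2 : cntLT D m = D.card := by
        unfold cntLT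
        rw [Finset.filter_true_of_mem]
        intro a ha
        exact (hD a).1 ha
      have h3 : C.filter (fun c : Fin n => (c : ℕ) < m) = C := by
        apply Finset.eq_of_subset_of_card_le (Finset.filter_subset _ _)
        unfold cntLT at h1 h2
        omega
      apply Finset.eq_of_subset_of_card_le
      · intro a ha
        rw [← h3] at ha
        exact (hD a).2 (Finset.mem_filter.1 ha).2
      · omega
    · rintro rfl
      rw [galeLE_iff]
      exact ⟨rfl, fun _ => le_rfl⟩
  rw [this, Finset.sum_singleton]

/-- Joint avoidance of 1432 and 1423. -/
def GoodPerm {n : ℕ} (w : Equiv.Perm (Fin n)) : Prop :=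
  ∀ a b c d : Fin n, a < b → b < c → c < d →
    w a < w c → w a < w d → w c < w b → w d < w b → False

lemma goodPerm_of {n : ℕ} (w : Equiv.Perm (Fin n))
    (h1432 : AvoidsPattern w ![1, 4, 3, 2]) (h1423 : AvoidsPattern w ![1, 4, 2, 3]) :
    GoodPerm w := by
  intro a b c d hab hbc hcd h1 h2 h3 h4
  have hmono : StrictMono ![a, b, c, d] := by
    rw [Fin.strictMono_iff_lt_succ]
    intro k
    fin_cases k
    · exact hab
    · exact hbc
    · exact hcd
  rcases lt_trichotomy (w c) (w d) with h | h | h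
  · apply h1423
    refine ⟨OrderEmbedding.ofStrictMono _ hmono, ?_⟩
    intro s t
    fin_cases s <;> fin_cases t <;> simp <;> order
  · have := w.injective h
    order
  · apply h1432
    refine ⟨OrderEmbedding.ofStrictMono _ hmono, ?_⟩
    intro s t
    fin_cases s <;> fin_cases t <;> simp <;> order

lemma swap_lt {n : ℕ} (i j : Fin n) (hij : (i : ℕ) + 1 = j) (a b : Fin n) (hab : a < b)
    (h : ¬ (a = i ∧ b = j)) : Equiv.swap i j a < Equiv.swap i j b := by
  simp only [Equiv.swap_apply_def]
  rw [Fin.lt_def] at *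
  simp only [Fin.ext_iff] at *
  split_ifs <;> omega

lemma goodPerm_step {n : ℕ} (w : Equiv.Perm (Fin n)) (hw : GoodPerm w) (i j : Fin n)
    (hij : (i : ℕ) + 1 = j) (hlt : w i < w j) (hmin : ∀ a, a < i → w i < w a) :
    GoodPerm (w * Equiv.swap i j) := by
  intro a b c d hab hbc hcd h1 h2 h3 h4
  simp only [Equiv.Perm.mul_apply] at h1 h2 h3 h4
  have hne : ∀ a : Fin n, a < i → Equiv.swap i j a = a := by
    intro a ha
    apply Equiv.swap_apply_of_ne_of_ne
    · exact ne_of_lt ha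
    · rintro rfl
      rw [Fin.lt_def] at ha
      omega
  have n1 : ¬ (a = i ∧ b = j) := by
    rintro ⟨rfl, rfl⟩
    rw [Equiv.swap_apply_left] at h1
    rw [Equiv.swap_apply_right] at h3
    order
  have n2 : ¬ (b = i ∧ c = j) := by
    rintro ⟨rfl, rfl⟩
    rw [hne a hab, Equiv.swap_apply_right] at h1
    have := hmin a hab
    order
  have n3 : ¬ (c = i ∧ d = j) := by
    rintro ⟨rfl, rfl⟩
    rw [hne a (hab.trans hbc), Equiv.swap_apply_right] at h2
    have := hmin a (hab.trans hbc)
    order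
  exact hw _ _ _ _ (swap_lt i j hij a b hab n1) (swap_lt i j hij b c hbc n2)
    (swap_lt i j hij c d hcd n3) h1 h2 h3 h4

lemma mem_rothe {n : ℕ} (w : Equiv.Perm (Fin n)) (p a : Fin n) :
    a ∈ rothe w (w p) ↔ w p < w a ∧ a < p := by
  simp [rothe]

lemma mem_rothe_swap {n : ℕ} (w : Equiv.Perm (Fin n)) (i j p a : Fin n) :
    a ∈ rothe (w * Equiv.swap i j) (w p) ↔
      w p < w (Equiv.swap i j a) ∧ a < Equiv.swap i j p := by
  have : (w * Equiv.swap i j).symm (w p) = Equiv.swap i j p := by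
    rw [Equiv.symm_apply_eq]
    simp
  simp [rothe, this]

/-- Columns that do not change. -/
lemma rothe_same {n : ℕ} (w : Equiv.Perm (Fin n)) (i j p : Fin n)
    (hij : (i : ℕ) + 1 = j) (hlt : w i < w j) (hp : p ≠ i)
    (hns : ¬ (j < p ∧ w i < w p ∧ w p < w j)) :
    rothe (w * Equiv.swap i j) (w p) = rothe w (w p) ∧
      (i ∈ rothe w (w p) → j ∈ rothe w (w p)) := by
  have hwi : w p ≠ w i := fun h => hp (w.injective h)
  constructor
  · ext a
    rw [mem_rothe, mem_rothe_swap]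
    by_cases hpj : p = j
    · subst hpj
      rw [Equiv.swap_apply_right, Equiv.swap_apply_def]
      split_ifs with h1 h2
      · subst h1; simp; order
      · subst h2; simp; rw [Fin.lt_def]; omega
      · rw [Fin.lt_def (a := a), Fin.lt_def (a := a)]
        rw [Fin.ext_iff] at h1
        constructor <;> rintro ⟨h3, h4⟩ <;> exact ⟨h3, by omega⟩
    · have hwj : w p ≠ w j := fun h => hpj (w.injective h)
      rw [Equiv.swap_apply_of_ne_of_ne hp hpj, Equiv.swap_apply_def]
      simp only [Fin.lt_def, Fin.ext_iff, ne_eq] at *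
      split_ifs with h1 h2
      · have : a = i := Fin.ext h1
        subst this
        omega
      · have : a = j := Fin.ext h2
        subst this
        omega
      · rfl
  · rw [mem_rothe, mem_rothe]
    rintro ⟨h1, h2⟩
    refine ⟨h1.trans hlt, ?_⟩
    by_contra h3
    have : p = j := by
      rw [Fin.ext_iff]
      simp only [Fin.lt_def] at *
      omega
    subst this
    order

lemma rothe_special {n : ℕ} (w : Equiv.Perm (Fin n)) (i j p : Fin n)
    (hij : (i : ℕ) + 1 = j) (hs : j < p ∧ w i < w p ∧ w p < w j) :
    i ∈ rothe (w * Equiv.swap i j) (w p) ∧ j ∉ rothe (w * Equiv.swap i j) (w p) ∧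
    rothe w (w p) = swapSet i j (rothe (w * Equiv.swap i j) (w p)) := by
  obtain ⟨h1, h2, h3⟩ := hs
  have hij' : i < j := by rw [Fin.lt_def]; omega
  have hp : Equiv.swap i j p = p :=
    Equiv.swap_apply_of_ne_of_ne (by order) (by order)
  refine ⟨?_, ?_, ?_⟩
  · rw [mem_rothe_swap, hp, Equiv.swap_apply_left]
    exact ⟨h3, by order⟩
  · rw [mem_rothe_swap, hp, Equiv.swap_apply_right]
    rintro ⟨h, _⟩
    order
  · ext a
    rw [mem_swapSet, mem_rothe_swap, mem_rothe, hp, Equiv.swap_apply_self]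
    apply and_congr Iff.rfl
    rw [Equiv.swap_apply_def]
    split_ifs with e1 e2
    · subst e1; constructor <;> intro <;> order
    · subst e2; constructor <;> intro <;> order
    · rfl

lemma rothe_pivot {n : ℕ} (w : Equiv.Perm (Fin n)) (i j : Fin n)
    (hij : (i : ℕ) + 1 = j) (hlt : w i < w j) (hmin : ∀ a, a < i → w i < w a) :
    (∀ a : Fin n, a ∈ rothe w (w i) ↔ (a : ℕ) < i) ∧
    (∀ a : Fin n, a ∈ rothe (w * Equiv.swap i j) (w i) ↔ (a : ℕ) < i + 1) := by
  constructor
  · intro a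
    rw [mem_rothe]
    exact ⟨fun h => h.2, fun h => ⟨hmin a h, h⟩⟩
  · intro a
    rw [mem_rothe_swap, Equiv.swap_apply_left, Fin.lt_def (a := a), hij]
    refine ⟨fun h => h.2, fun h => ⟨?_, h⟩⟩
    rw [Equiv.swap_apply_def]
    split_ifs with e1 e2
    · exact hlt
    · subst e2; omega
    · rw [Fin.ext_iff] at e1
      exact hmin a (by rw [Fin.lt_def]; omega)

lemma colPoly_pivot {n : ℕ} (i j : Fin n) (hij : (i : ℕ) + 1 = j) (D E : Finset (Fin n))
    (hE : ∀ a : Fin n, a ∈ E ↔ (a : ℕ) < i) (hD : ∀ a : Fin n, a ∈ D ↔ (a : ℕ) < i + 1) :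
    colPoly D = X i * colPoly E ∧ rename (Equiv.swap i j) (colPoly E) = colPoly E := by
  constructor
  · rw [colPoly_initial D _ hD, colPoly_initial E _ hE]
    have : D = insert i E := by
      ext a
      rw [Finset.mem_insert, hD, hE, Fin.ext_iff]
      omega
    rw [this, Finset.prod_insert]
    rw [hE]; omega
  · apply rename_colPoly i j hij
    rw [hE]; omega

lemma prod_step {n : ℕ} (w : Equiv.Perm (Fin n)) (hw : GoodPerm w) (i j : Fin n)
    (hij : (i : ℕ) + 1 = j) (hlt : w i < w j) (hmin : ∀ a, a < i → w i < w a) :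
    (X i - X j) * ∏ k, colPoly (rothe w k) =
      (∏ k, colPoly (rothe (w * Equiv.swap i j) k)) -
        rename (Equiv.swap i j) (∏ k, colPoly (rothe (w * Equiv.swap i j) k)) := by
  classical
  have hij' : i < j := by rw [Fin.lt_def]; omega
  set v := w * Equiv.swap i j with hv
  rw [← Equiv.prod_comp w (fun k => colPoly (rothe w k)),
    ← Equiv.prod_comp w (fun k => colPoly (rothe v k))]
  obtain ⟨hE, hD⟩ := rothe_pivot w i j hij hlt hmin
  obtain ⟨hp1, hp2⟩ := colPoly_pivot i j hij _ _ hE hD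
  rw [← Finset.mul_prod_erase Finset.univ (fun p => colPoly (rothe w (w p))) (Finset.mem_univ i),
    ← Finset.mul_prod_erase Finset.univ (fun p => colPoly (rothe v (w p))) (Finset.mem_univ i)]
  rw [hp1]
  by_cases hex : ∃ q, j < q ∧ w i < w q ∧ w q < w j
  · obtain ⟨q, hq⟩ := hex
    obtain ⟨s1, s2, s3⟩ := rothe_special w i j q hij hq
    have hqi : q ≠ i := by
      have := hq.1
      order
    have hqm : q ∈ Finset.univ.erase i := by simp [hqi]
    have huniq : ∀ p, p ≠ q → ¬ (j < p ∧ w i < w p ∧ w p < w j) := by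
      rintro p hpq ⟨a1, a2, a3⟩
      obtain ⟨b1, b2, b3⟩ := hq
      rcases lt_or_gt_of_ne hpq with h | h
      · exact hw i j p q hij' a1 h a2 b2 a3 b3
      · exact hw i j q p hij' b1 h b2 a2 b3 a3
    rw [← Finset.mul_prod_erase _ (fun p => colPoly (rothe w (w p))) hqm,
      ← Finset.mul_prod_erase _ (fun p => colPoly (rothe v (w p))) hqm]
    have hrest : ∏ p ∈ (Finset.univ.erase i).erase q, colPoly (rothe v (w p)) =
        ∏ p ∈ (Finset.univ.erase i).erase q, colPoly (rothe w (w p)) := by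
      apply Finset.prod_congr rfl
      intro p hp
      simp only [Finset.mem_erase, Finset.mem_univ, and_true] at hp
      rw [(rothe_same w i j p hij hlt hp.2 (huniq p hp.1)).1]
    have hsym : rename (Equiv.swap i j)
        (∏ p ∈ (Finset.univ.erase i).erase q, colPoly (rothe w (w p))) =
        ∏ p ∈ (Finset.univ.erase i).erase q, colPoly (rothe w (w p)) := by
      rw [map_prod]
      apply Finset.prod_congr rfl
      intro p hp
      simp only [Finset.mem_erase, Finset.mem_univ, and_true] at hp
      exact rename_colPoly i j hij _ (rothe_same w i j p hij hlt hp.2 (huniq p hp.1)).2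
    have hstep := colPoly_step i j hij _ s1 s2
    rw [← s3] at hstep
    simp only [map_mul, hrest, hsym, hp2, rename_X, Equiv.swap_apply_left]
    linear_combination (colPoly (rothe w (w i)) *
      ∏ p ∈ (Finset.univ.erase i).erase q, colPoly (rothe w (w p))) * hstep
  · have hrest : ∏ p ∈ Finset.univ.erase i, colPoly (rothe v (w p)) =
        ∏ p ∈ Finset.univ.erase i, colPoly (rothe w (w p)) := by
      apply Finset.prod_congr rfl
      intro p hp
      simp only [Finset.mem_erase, Finset.mem_univ, and_true] at hp
      rw [(rothe_same w i j p hij hlt hp (fun h => hex ⟨p, h⟩)).1]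
    have hsym : rename (Equiv.swap i j)
        (∏ p ∈ Finset.univ.erase i, colPoly (rothe w (w p))) =
        ∏ p ∈ Finset.univ.erase i, colPoly (rothe w (w p)) := by
      rw [map_prod]
      apply Finset.prod_congr rfl
      intro p hp
      simp only [Finset.mem_erase, Finset.mem_univ, and_true] at hp
      exact rename_colPoly i j hij _ (rothe_same w i j p hij hlt hp (fun h => hex ⟨p, h⟩)).2
    simp only [map_mul, hrest, hsym, hp2, rename_X, Equiv.swap_apply_left]
    ring

lemma prod_base {n : ℕ} : ∏ k, colPoly (rothe (Fin.revPerm : Equiv.Perm (Fin n)) k) =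
    ∏ i : Fin n, X i ^ (n - 1 - (i : ℕ)) := by
  classical
  have hm : ∀ k a : Fin n, a ∈ rothe (Fin.revPerm : Equiv.Perm (Fin n)) k ↔
      (a : ℕ) < n - 1 - (k : ℕ) := by
    intro k a
    simp only [rothe, Finset.mem_filter, Finset.mem_univ, true_and, Fin.revPerm_apply,
      Fin.revPerm_symm, Fin.lt_def, Fin.val_rev]
    omega
  have h1 : ∀ k : Fin n, colPoly (rothe (Fin.revPerm : Equiv.Perm (Fin n)) k) =
      ∏ a : Fin n, if (a : ℕ) < n - 1 - (k : ℕ) then X a else 1 := by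
    intro k
    rw [colPoly_initial _ _ (hm k), ← Finset.prod_filter]
    congr 1
    ext a
    rw [hm]
    simp
  simp only [h1]
  rw [Finset.prod_comm]
  apply Finset.prod_congr rfl
  intro a _
  rw [← Finset.prod_filter, Finset.prod_const]
  congr 1
  have : (Finset.univ.filter fun k : Fin n => (a : ℕ) < n - 1 - (k : ℕ)) = Finset.Iio a.rev := by
    ext k
    simp only [Finset.mem_filter, Finset.mem_univ, true_and, Finset.mem_Iio, Fin.lt_def,
      Fin.val_rev]
    omega
  rw [this, Fin.card_Iio, Fin.val_rev]
  omega

/-- Either `w` is the longest element or it has a first ascent. -/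
lemma exists_first_ascent {n : ℕ} (w : Equiv.Perm (Fin n)) :
    w = Fin.revPerm ∨ ∃ i j : Fin n, (i : ℕ) + 1 = j ∧ w i < w j ∧ ∀ a, a < i → w i < w a := by
  by_cases h : ∃ i : ℕ, ∃ (h1 : i + 1 < n), w ⟨i, by omega⟩ < w ⟨i + 1, h1⟩
  · right
    classical
    obtain ⟨i, h1, h2, hmin⟩ : ∃ i : ℕ, ∃ (h1 : i + 1 < n), w ⟨i, by omega⟩ < w ⟨i + 1, h1⟩ ∧
        ∀ m, m < i → ∀ (h1 : m + 1 < n), w ⟨m + 1, h1⟩ < w ⟨m, by omega⟩ := by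
      obtain ⟨h1, h2⟩ := Nat.find_spec h
      refine ⟨Nat.find h, h1, h2, ?_⟩
      intro m hm h1
      have := Nat.find_min h hm
      push Not at this
      refine lt_of_le_of_ne (this h1) ?_
      intro he
      have := w.injective he
      simp at this
    refine ⟨⟨i, by omega⟩, ⟨i + 1, h1⟩, rfl, h2, ?_⟩
    have aux : ∀ d m, m + d + 1 = i → ∀ (hm : m < n), w ⟨i, by omega⟩ < w ⟨m, hm⟩ := by
      intro d
      induction d with
      | zero =>
        intro m hm hmn
        subst hm
        exact hmin m (by omega) (by omega)
      | succ d ih =>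
        intro m hm hmn
        exact (ih (m + 1) (by omega) (by omega)).trans (hmin m (by omega) (by omega))
    intro a ha
    have ha' : (a : ℕ) < i := ha
    exact aux (i - a - 1) a (by omega) a.2
  · left
    push Not at h
    have hanti : StrictAnti w := by
      rcases n with _ | n
      · intro a
        exact a.elim0
      rw [Fin.strictAnti_iff_succ_lt]
      intro k
      refine lt_of_le_of_ne (h k (by omega)) ?_
      intro he
      have := w.injective he
      simp [Fin.ext_iff] at this
    have hm : StrictMono (fun a : Fin n => w a.rev) := by
      intro a b hab
      exact hanti (Fin.rev_lt_rev.2 hab)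
    let e : Fin n ≃o Fin n := StrictMono.orderIsoOfSurjective _ hm
      (fun b => ⟨(w.symm b).rev, by simp⟩)
    have he : e = OrderIso.refl _ := Subsingleton.elim _ _
    ext a
    have : e a.rev = a.rev := by rw [he]; rfl
    have h2 : e a.rev = w a := by
      change w a.rev.rev = w a
      rw [Fin.rev_rev]
    rw [← h2, this]
    rfl

/-- Termination measure. -/
def permMeasure {n : ℕ} (w : Equiv.Perm (Fin n)) : ℕ := ∑ a : Fin n, (a : ℕ) * (w a : ℕ)

lemma permMeasure_lt {n : ℕ} (w : Equiv.Perm (Fin n)) (i j : Fin n)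
    (hij : (i : ℕ) + 1 = j) (hlt : w i < w j) :
    permMeasure (w * Equiv.swap i j) < permMeasure w := by
  classical
  have hne : j ≠ i := by
    rintro rfl
    omega
  have hjm : j ∈ Finset.univ.erase i := by simp [hne]
  unfold permMeasure
  rw [← Finset.add_sum_erase Finset.univ _ (Finset.mem_univ i),
    ← Finset.add_sum_erase Finset.univ (fun a : Fin n => (a : ℕ) * (w a : ℕ)) (Finset.mem_univ i),
    ← Finset.add_sum_erase _ _ hjm,
    ← Finset.add_sum_erase _ (fun a : Fin n => (a : ℕ) * (w a : ℕ)) hjm]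
  have hrest : ∑ a ∈ (Finset.univ.erase i).erase j, (a : ℕ) * ((w * Equiv.swap i j) a : ℕ) =
      ∑ a ∈ (Finset.univ.erase i).erase j, (a : ℕ) * (w a : ℕ) := by
    apply Finset.sum_congr rfl
    intro a ha
    simp only [Finset.mem_erase, Finset.mem_univ, and_true] at ha
    rw [Equiv.Perm.mul_apply, Equiv.swap_apply_of_ne_of_ne ha.2 ha.1]
  rw [hrest]
  simp only [Equiv.Perm.mul_apply, Equiv.swap_apply_left, Equiv.swap_apply_right]
  rw [Fin.lt_def] at hlt
  rw [← hij]
  nlinarith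

lemma schubert_eq_prod {n : ℕ} (S : Equiv.Perm (Fin n) → MvPolynomial (Fin n) ℤ)
    (hS : IsSchubertFamily S) (N : ℕ) : ∀ w : Equiv.Perm (Fin n), permMeasure w = N →
    GoodPerm w → S w = ∏ k, colPoly (rothe w k) := by
  induction N using Nat.strong_induction_on with
  | _ N ih =>
    intro w hN hw
    rcases exists_first_ascent w with rfl | ⟨i, j, hij, hlt, hmin⟩
    · rw [hS.1, prod_base]
    · have hv := ih _ (hN ▸ permMeasure_lt w i j hij hlt) (w * Equiv.swap i j) rfl
        (goodPerm_step w hw i j hij hlt hmin)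
      have h1 := hS.2 w i j hij hlt
      rw [hv, ← prod_step w hw i j hij hlt hmin] at h1
      have hne : (X i - X j : MvPolynomial (Fin n) ℤ) ≠ 0 := by
        rw [sub_ne_zero]
        intro h
        have := X_injective h
        subst this
        omega
      exact mul_left_cancel₀ hne h1

/-- If `w` avoids the patterns 1432 and 1423, then the Schubert polynomial `S_w` equals the
upper bound `Max_w`. -/
theorem schubert_eq_max_of_avoids_1432_1423 (n : ℕ) (hn : 1 ≤ n) (w : Equiv.Perm (Fin n))
    (S : Equiv.Perm (Fin n) → MvPolynomial (Fin n) ℤ) (hS : IsSchubertFamily S)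
    (h1432 : AvoidsPattern w ![1, 4, 3, 2]) (h1423 : AvoidsPattern w ![1, 4, 2, 3]) :
    S w = MaxPoly (rothe w) := by
  rw [maxPoly_eq]
  exact schubert_eq_prod S hS _ w rfl (goodPerm_of w h1432 h1423)
end
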